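/- For every n ≥ 1, every R > 0 and every ρ with R/2 ≤ ρ < e^{-1/2} R, there exists a constant C > 0, depending only on R, ρ and n, such that for every smooth plurisubharmonic function ψ on the open ball B_R(0) ⊆ ℂⁿ satisfying ψ(0) ≥ -1 and ψ ≤ 0 on B_R(0), one has ∫_{B_ρ(0)} e^{-ψ} dV ≤ C. -/

import Mathlib

open MeasureTheory

/-- The Laplacian `Δf = ∂²f/∂x² + ∂²f/∂y²` of a function `f : ℂ → ℝ`, expressed via
iterated directional (Fréchet) derivatives in the directions `1` and `i`. -/
noncomputable def laplacian (f : ℂ → ℝ) (z : ℂ) : ℝ :=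
  fderiv ℝ (fun w => fderiv ℝ f w 1) z 1 +
    fderiv ℝ (fun w => fderiv ℝ f w Complex.I) z Complex.I

/- Lebesgue measure on `ℂⁿ = EuclideanSpace ℂ (Fin n)` (the Haar measure normalized so that
an orthonormal real basis spans a parallelepiped of volume one, i.e. Lebesgue measure
on `ℝ^{2n}`), obtained from the real inner product space structure. -/
noncomputable instance (n : ℕ) : MeasurableSpace (EuclideanSpace ℂ (Fin n)) :=
  MeasurableSpace.comap (WithLp.ofLp (p := 2)) MeasurableSpace.pi

instance (n : ℕ) : BorelSpace (EuclideanSpace ℂ (Fin n)) := PiLp.borelSpace 2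

/-!
Since the plurisubharmonic function is only tested on complex lines through the centre, polar
coordinates in the unit vector and the complex parameter reduce the theorem to one variable.
There, Jensen's formula on a small disc around `z` writes `-u z` as minus a circle average, which
the sub-mean value property bounds in terms of `-u c`, plus the logarithmic potential of the
Riesz measure `ν = Δu / 2π`. Comparing `-a ≤ u c` with `u ≤ 0` on the circle of radius `R` gives
`ν (ball c r) * log (R / r) ≤ a`, so that `ν` has total mass `m < 2` on a disc of radius
`r < exp (-a / 2) * R`. By Jensen's inequality for `exp` and Fubini, the exponential of its
potential is then controlled by the integral of `‖w‖ ^ (-m)`, which converges because `m < 2`.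
-/

open Set Filter Topology Metric Real
open scoped ENNReal Laplacian

section Calculus

variable {F : Type*} [NormedAddCommGroup F] [NormedSpace ℝ F]

lemma hasDerivAt_intervalIntegral_of_continuous {f f' : ℝ → ℝ → F} {a b x₀ : ℝ}
    (hf : ∀ x, Continuous (f x)) (hf' : Continuous f'.uncurry)
    (h : ∀ x t, HasDerivAt (fun y ↦ f y t) (f' x t) x) :
    HasDerivAt (fun x ↦ ∫ t in a..b, f x t) (∫ t in a..b, f' x₀ t) x₀ := by
  obtain ⟨C, hC⟩ := ((isCompact_closedBall x₀ 1).prod isCompact_uIcc).exists_bound_of_continuousOn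
    (hf'.continuousOn (s := closedBall x₀ 1 ×ˢ uIcc a b))
  have hf'₀ : Continuous (f' x₀) := hf'.comp (.prodMk_right x₀)
  refine (intervalIntegral.hasDerivAt_integral_of_dominated_loc_of_deriv_le
    (bound := fun _ ↦ C) (closedBall_mem_nhds x₀ one_pos)
    (.of_forall fun x ↦ (hf x).aestronglyMeasurable) ((hf x₀).intervalIntegrable a b)
    hf'₀.aestronglyMeasurable (.of_forall fun t ht x hx ↦ ?_) intervalIntegrable_const
    (.of_forall fun t _ x _ ↦ h x t)).2
  exact hC (x, t) ⟨hx, uIoc_subset_uIcc ht⟩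

lemma laplacian_eq_laplacian_of_contDiffAt {u : ℂ → ℝ} {z : ℂ} (hu : ContDiffAt ℝ 2 u z) :
    laplacian u z = Δ u z := by
  have hu' : DifferentiableAt ℝ (fderiv ℝ u) z :=
    (hu.fderiv_right (m := 1) (by norm_num)).differentiableAt one_ne_zero
  simp only [laplacian, InnerProductSpace.laplacian_eq_iteratedFDeriv_complexPlane,
    iteratedFDeriv_two_apply]
  simp [fderiv_clm_apply hu' (differentiableAt_const _)]

lemma laplacian_eq_fderiv_fderiv (u : ℂ → F) (z : ℂ) {e : ℂ} (he : ‖e‖ = 1) :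
    Δ u z = fderiv ℝ (fderiv ℝ u) z e e
      + fderiv ℝ (fderiv ℝ u) z (Complex.I * e) (Complex.I * e) := by
  obtain ⟨a, rfl⟩ : ∃ a : Circle, ↑a = e := ⟨⟨e, mem_sphere_zero_iff_norm.2 he⟩, rfl⟩
  simp [congrFun (InnerProductSpace.laplacian_eq_iteratedFDeriv_orthonormalBasis u
    (Complex.orthonormalBasisOneI.map (rotation a))) z, iteratedFDeriv_two_apply, mul_comm]

lemma continuous_laplacian_of_contDiff {u : ℂ → F} (hu : ContDiff ℝ 2 u) : Continuous (Δ u) := by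
  have : Continuous (fderiv ℝ (fderiv ℝ u)) :=
    (hu.fderiv_right (m := 1) (by norm_num)).continuous_fderiv one_ne_zero
  simp only [funext fun z ↦ laplacian_eq_fderiv_fderiv u z norm_one]
  fun_prop

end Calculus

section RadialDerivative

variable {F : Type*} [NormedAddCommGroup F] [NormedSpace ℝ F] {u : ℂ → F} {c : ℂ}

/-- The average over the circle of centre `c` and radius `t` of the outward normal derivative
of `u`; for `C¹` functions, the derivative in `t` of `circleAverage u c t`. -/
noncomputable def radialDerivAverage (u : ℂ → F) (c : ℂ) (t : ℝ) : F :=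
  (2 * π)⁻¹ • ∫ θ in 0..2 * π, fderiv ℝ u (circleMap c t θ) (circleMap 0 1 θ)

lemma hasDerivAt_circleMap_radius (c : ℂ) (t θ : ℝ) :
    HasDerivAt (fun s ↦ circleMap c s θ) (circleMap 0 1 θ) t := by
  simpa [circleMap] using ((Complex.ofRealCLM.hasDerivAt (x := t)).mul_const _).const_add c

lemma hasDerivAt_circleAverage (hu : ContDiff ℝ 1 u) (t : ℝ) :
    HasDerivAt (circleAverage u c) (radialDerivAverage u c t) t := by
  have : Continuous (fderiv ℝ u) := hu.continuous_fderiv one_ne_zero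
  refine (hasDerivAt_intervalIntegral_of_continuous
    (f' := fun t θ ↦ fderiv ℝ u (circleMap c t θ) (circleMap 0 1 θ))
    (fun s ↦ ?_) ?_ fun s θ ↦ ?_).const_smul (2 * π)⁻¹
  · fun_prop
  · simp only [Function.uncurry_def]
    fun_prop
  · exact ((hu.differentiable one_ne_zero _).hasFDerivAt.comp_hasDerivAt s
      (hasDerivAt_circleMap_radius c s θ) :)

lemma continuous_radialDerivAverage (hu : ContDiff ℝ 1 u) :
    Continuous (radialDerivAverage u c) := by
  have : Continuous (fderiv ℝ u) := hu.continuous_fderiv one_ne_zero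
  exact (intervalIntegral.continuous_parametric_intervalIntegral_of_continuous' (by fun_prop)
    0 (2 * π)).const_smul _

lemma smul_radialDerivAverage (u : ℂ → F) (c : ℂ) (t : ℝ) :
    t • radialDerivAverage u c t =
      (2 * π)⁻¹ • ∫ θ in 0..2 * π, fderiv ℝ u (circleMap c t θ) (circleMap 0 t θ) := by
  have (θ : ℝ) : circleMap 0 t θ = t • circleMap 0 1 θ := by simp [circleMap]
  simp only [radialDerivAverage, this, map_smul, intervalIntegral.integral_smul, smul_comm t]

/-- The tangential derivative of `u` is periodic along a circle, so its derivative along the circle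
has zero integral. -/
lemma intervalIntegral_deriv_tangential_eq_zero [CompleteSpace F] (hu : ContDiff ℝ 2 u) (t : ℝ) :
    ∫ θ in 0..2 * π,
      (t • fderiv ℝ (fderiv ℝ u) (circleMap c t θ) (Complex.I * circleMap 0 1 θ)
        (Complex.I * circleMap 0 1 θ) - fderiv ℝ u (circleMap c t θ) (circleMap 0 1 θ)) = 0 := by
  have hu₁ : ContDiff ℝ 1 (fderiv ℝ u) := hu.fderiv_right (by norm_num)
  have : Continuous (fderiv ℝ (fderiv ℝ u)) := hu₁.continuous_fderiv one_ne_zero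
  have hderiv (θ : ℝ) : HasDerivAt
      (fun θ ↦ fderiv ℝ u (circleMap c t θ) (Complex.I * circleMap 0 1 θ))
      (t • fderiv ℝ (fderiv ℝ u) (circleMap c t θ) (Complex.I * circleMap 0 1 θ)
        (Complex.I * circleMap 0 1 θ) - fderiv ℝ u (circleMap c t θ) (circleMap 0 1 θ)) θ := by
    have hp : circleMap 0 t θ * Complex.I = t • (Complex.I * circleMap 0 1 θ) := by
      simp [circleMap]; ring
    have he : Complex.I * (circleMap 0 1 θ * Complex.I) = -circleMap 0 1 θ := by
      linear_combination circleMap 0 1 θ * Complex.I_mul_I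
    refine HasDerivAt.congr_deriv (((hu₁.differentiable one_ne_zero _).hasFDerivAt.comp_hasDerivAt θ
      (hasDerivAt_circleMap c t θ)).clm_apply
      ((hasDerivAt_circleMap 0 1 θ).const_mul Complex.I)) ?_
    rw [hp, he, Function.comp_apply, map_smul, map_neg, sub_eq_add_neg, smul_apply]
  rw [intervalIntegral.integral_eq_sub_of_hasDerivAt (fun θ _ ↦ hderiv θ)
    (Continuous.intervalIntegrable (by fun_prop) _ _)]
  simp [circleMap]

lemma fderiv_radial_add_eq_smul_laplacian_sub (u : ℂ → F) (c : ℂ) (t θ : ℝ) :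
    fderiv ℝ (fderiv ℝ u) (circleMap c t θ) (circleMap 0 1 θ) (circleMap 0 t θ)
      + fderiv ℝ u (circleMap c t θ) (circleMap 0 1 θ) = t • Δ u (circleMap c t θ) -
      (t • fderiv ℝ (fderiv ℝ u) (circleMap c t θ) (Complex.I * circleMap 0 1 θ)
        (Complex.I * circleMap 0 1 θ) - fderiv ℝ u (circleMap c t θ) (circleMap 0 1 θ)) := by
  have ht : circleMap 0 t θ = t • circleMap 0 1 θ := by simp [circleMap]
  rw [laplacian_eq_fderiv_fderiv u _ (e := circleMap 0 1 θ) (by simp), ht, map_smul]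
  module

/-- Polar coordinates: `Δ = ∂ₜ² + t⁻¹ ∂ₜ + t⁻² ∂_θ²`, and the last term has zero average. -/
lemma hasDerivAt_smul_radialDerivAverage [CompleteSpace F] (hu : ContDiff ℝ 2 u) (t : ℝ) :
    HasDerivAt (fun s ↦ s • radialDerivAverage u c s) (t • circleAverage (Δ u) c t) t := by
  have hu₁ : ContDiff ℝ 1 (fderiv ℝ u) := hu.fderiv_right (by norm_num)
  have : Continuous (fderiv ℝ (fderiv ℝ u)) := hu₁.continuous_fderiv one_ne_zero
  have hcont := continuous_laplacian_of_contDiff hu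
  have hd : HasDerivAt
      (fun s ↦ ∫ θ in 0..2 * π, fderiv ℝ u (circleMap c s θ) (circleMap 0 s θ))
      (∫ θ in 0..2 * π,
        (fderiv ℝ (fderiv ℝ u) (circleMap c t θ) (circleMap 0 1 θ) (circleMap 0 t θ)
          + fderiv ℝ u (circleMap c t θ) (circleMap 0 1 θ))) t := by
    have hu₀ := hu₁.continuous
    refine hasDerivAt_intervalIntegral_of_continuous (f' := fun t θ ↦
      fderiv ℝ (fderiv ℝ u) (circleMap c t θ) (circleMap 0 1 θ) (circleMap 0 t θ)
        + fderiv ℝ u (circleMap c t θ) (circleMap 0 1 θ)) (fun s ↦ by fun_prop) ?_ fun s θ ↦ ?_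
    · simp only [Function.uncurry_def]
      fun_prop
    · exact ((hu₁.differentiable one_ne_zero _).hasFDerivAt.comp_hasDerivAt s
        (hasDerivAt_circleMap_radius c s θ)).clm_apply (hasDerivAt_circleMap_radius 0 s θ)
  simp only [smul_radialDerivAverage]
  refine (hd.const_smul (2 * π)⁻¹).congr_deriv ?_
  simp only [fderiv_radial_add_eq_smul_laplacian_sub]
  have hu₀ := hu₁.continuous
  rw [intervalIntegral.integral_sub (Continuous.intervalIntegrable (by fun_prop) _ _)
    (Continuous.intervalIntegrable (by fun_prop) _ _),
    intervalIntegral_deriv_tangential_eq_zero hu, sub_zero, intervalIntegral.integral_smul,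
    circleAverage_def, smul_comm]

/-- Integrate the derivative of `(log s - log t) • t • D t + M t`, where `M` and `D` are the circle
averages of `u` and of its normal derivative. -/
lemma intervalIntegral_log_smul_circleAverage_laplacian [CompleteSpace F] (hu : ContDiff ℝ 2 u)
    {s : ℝ} (hs : 0 ≤ s) :
    ∫ t in 0..s, (t * (log s - log t)) • circleAverage (Δ u) c t = circleAverage u c s - u c := by
  have hu₁ : ContDiff ℝ 1 u := hu.of_le one_le_two
  have hlog : Continuous fun t ↦ t * (log s - log t) := by
    simpa only [mul_sub] using! (continuous_mul_const (log s)).sub continuous_mul_log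
  have hD := continuous_radialDerivAverage (c := c) hu₁
  have hA := continuous_laplacian_of_contDiff hu
  have hu₀ := hu.continuous
  have hderiv (t : ℝ) (ht : 0 < t) : HasDerivAt
      (fun t ↦ (t * (log s - log t)) • radialDerivAverage u c t + circleAverage u c t)
      ((t * (log s - log t)) • circleAverage (Δ u) c t) t := by
    simp only [mul_comm _ (log s - log _), mul_smul]
    refine HasDerivAt.congr_deriv ((((hasDerivAt_log ht.ne').const_sub (log s)).smul
      (hasDerivAt_smul_radialDerivAverage hu t)).add (hasDerivAt_circleAverage hu₁ t)) ?_
    simp [smul_smul, ht.ne']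
  rw [intervalIntegral.integral_eq_sub_of_hasDerivAt_of_le hs (by fun_prop)
    (fun t ht ↦ hderiv t ht.1) (Continuous.intervalIntegrable (by fun_prop) _ _)]
  simp

end RadialDerivative

section Subharmonic

variable {u : ℂ → ℝ} {c : ℂ} {R r t : ℝ}

lemma monotoneOn_mul_radialDerivAverage (hu : ContDiff ℝ 2 u) (hΔ : ∀ z ∈ ball c R, 0 ≤ Δ u z) :
    MonotoneOn (fun t ↦ t * radialDerivAverage u c t) (Icc 0 R) := by
  have hderiv := hasDerivAt_smul_radialDerivAverage (c := c) hu
  refine monotoneOn_of_deriv_nonneg (convex_Icc 0 R)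
    (fun t _ ↦ (hderiv t).continuousAt.continuousWithinAt)
    (fun t _ ↦ (hderiv t).differentiableAt.differentiableWithinAt) fun t ht ↦ ?_
  rw [interior_Icc] at ht
  refine (hderiv t).deriv ▸ mul_nonneg ht.1.le (circleAverage_nonneg_of_nonneg fun z hz ↦ hΔ z ?_)
  exact sphere_subset_ball ht.2 (abs_of_pos ht.1 ▸ hz)

lemma mul_radialDerivAverage_nonneg (hu : ContDiff ℝ 2 u) (hΔ : ∀ z ∈ ball c R, 0 ≤ Δ u z)
    (ht : t ∈ Icc 0 R) : 0 ≤ t * radialDerivAverage u c t := by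
  simpa using monotoneOn_mul_radialDerivAverage hu hΔ ⟨le_rfl, ht.1.trans ht.2⟩ ht ht.1

lemma monotoneOn_circleAverage (hu : ContDiff ℝ 2 u) (hΔ : ∀ z ∈ ball c R, 0 ≤ Δ u z) :
    MonotoneOn (circleAverage u c) (Icc 0 R) := by
  have hderiv := hasDerivAt_circleAverage (c := c) (hu.of_le one_le_two)
  refine monotoneOn_of_deriv_nonneg (convex_Icc 0 R)
    (fun t _ ↦ (hderiv t).continuousAt.continuousWithinAt)
    (fun t _ ↦ (hderiv t).differentiableAt.differentiableWithinAt) fun t ht ↦ ?_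
  rw [interior_Icc] at ht
  rw [(hderiv t).deriv]
  exact nonneg_of_mul_nonneg_right
    (mul_radialDerivAverage_nonneg hu hΔ (Ioo_subset_Icc_self ht)) ht.1

/-- Circle averages of subharmonic functions are convex in the logarithm of the radius. -/
lemma mul_radialDerivAverage_mul_log_le (hu : ContDiff ℝ 2 u) (hΔ : ∀ z ∈ ball c R, 0 ≤ Δ u z)
    (hr : 0 < r) (hrR : r ≤ R) :
    r * radialDerivAverage u c r * (log R - log r) ≤ circleAverage u c R - circleAverage u c r := by
  set m := r * radialDerivAverage u c r
  have hderiv (t : ℝ) (ht : 0 < t) : HasDerivAt (fun t ↦ circleAverage u c t - m * log t)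
      (radialDerivAverage u c t - m * t⁻¹) t :=
    (hasDerivAt_circleAverage (hu.of_le one_le_two) t).sub ((hasDerivAt_log ht.ne').const_mul m)
  have hmono : MonotoneOn (fun t ↦ circleAverage u c t - m * log t) (Icc r R) := by
    refine monotoneOn_of_deriv_nonneg (convex_Icc r R)
      (fun t ht ↦ (hderiv t (hr.trans_le ht.1)).continuousAt.continuousWithinAt)
      (fun t ht ↦ (hderiv t (hr.trans_le (interior_subset ht).1)).differentiableAt
        |>.differentiableWithinAt) fun t ht ↦ ?_
    have htI := interior_subset ht
    have ht₀ : 0 < t := hr.trans_le htI.1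
    rw [(hderiv t ht₀).deriv, sub_nonneg, ← div_eq_mul_inv, div_le_iff₀' ht₀]
    exact monotoneOn_mul_radialDerivAverage hu hΔ ⟨hr.le, hrR⟩ ⟨ht₀.le, htI.2⟩ htI.1
  have := hmono (left_mem_Icc.2 hrR) (right_mem_Icc.2 hrR) hrR
  linarith

end Subharmonic

section Polar

variable {F : Type*} [NormedAddCommGroup F] [NormedSpace ℝ F] {c : ℂ} {s : ℝ}

lemma integrableOn_polar_smul {g : ℝ → ℝ} {h : ℝ × ℝ → F} (hs : 0 ≤ s)
    (hg : IntervalIntegrable g volume 0 s) (hh : Continuous h) :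
    IntegrableOn (fun p : ℝ × ℝ ↦ g p.1 • h p) (Ioo 0 s ×ˢ Ioo (-π) π) := by
  refine IntegrableOn.smul_continuousOn_of_subset ?_ (hh.continuousOn (s := Icc 0 s ×ˢ Icc (-π) π))
    (measurableSet_Ioo.prod measurableSet_Ioo) (isCompact_Icc.prod isCompact_Icc)
    (prod_mono Ioo_subset_Icc_self Ioo_subset_Icc_self)
  rw [IntegrableOn, Measure.volume_eq_prod, ← Measure.prod_restrict]
  exact ((intervalIntegrable_iff_integrableOn_Ioo_of_le hs).1 hg).integrable.comp_fst _

lemma setIntegral_ball_eq_setIntegral_polar (f : ℂ → F) :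
    ∫ ζ in ball c s, f ζ =
      ∫ p in Ioo 0 s ×ˢ Ioo (-π) π, p.1 • f (circleMap c p.1 p.2) := by
  have htarget : polarCoord.target ∩ Prod.fst ⁻¹' Iio s = Ioo 0 s ×ˢ Ioo (-π) π := by
    rw [polarCoord_target, Set.prod_eq, Set.prod_eq, inter_right_comm]
    rfl
  have hpoint (p : ℝ × ℝ) (hp : p ∈ polarCoord.target) :
      p.1 • (ball c s).indicator f (c + Complex.polarCoord.symm p) =
        (Prod.fst ⁻¹' Iio s).indicator (fun p ↦ p.1 • f (circleMap c p.1 p.2)) p := by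
    have hp₁ : |p.1| = p.1 := abs_of_pos hp.1
    have hmap : c + Complex.polarCoord.symm p = circleMap c p.1 p.2 := by
      simp [circleMap, Complex.exp_mul_I]
    rw [hmap]
    by_cases hps : p.1 < s <;> simp [indicator, mem_ball, dist_eq_norm, hp₁, hps]
  calc ∫ ζ in ball c s, f ζ = ∫ w, (ball c s).indicator f (c + w) := by
        rw [integral_add_left_eq_self, integral_indicator measurableSet_ball]
    _ = ∫ p in polarCoord.target, p.1 • (ball c s).indicator f (c + Complex.polarCoord.symm p) :=
        (Complex.integral_comp_polarCoord_symm _).symm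
    _ = _ := by
        rw [setIntegral_congr_fun polarCoord.open_target.measurableSet hpoint,
          setIntegral_indicator (measurable_fst measurableSet_Iio), htarget]

lemma setIntegral_ball_smul_eq_intervalIntegral_circleAverage {g : ℝ → ℝ} {h : ℂ → F} (hs : 0 ≤ s)
    (hg : IntervalIntegrable (fun t ↦ t * g t) volume 0 s) (hh : Continuous h) :
    ∫ ζ in ball c s, g ‖ζ - c‖ • h ζ =
      (2 * π) • ∫ t in 0..s, (t * g t) • circleAverage h c t := by
  have hint := integrableOn_polar_smul hs hg (h := fun p ↦ h (circleMap c p.1 p.2)) (by fun_prop)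
  have hcongr : EqOn (fun p : ℝ × ℝ ↦ p.1 • g ‖circleMap c p.1 p.2 - c‖ • h (circleMap c p.1 p.2))
      (fun p ↦ (p.1 * g p.1) • h (circleMap c p.1 p.2)) (Ioo 0 s ×ˢ Ioo (-π) π) := fun p hp ↦ by
    simp [abs_of_pos hp.1.1, mul_smul]
  have havg (t : ℝ) : (2 * π) • circleAverage h c t = ∫ θ in Ioo (-π) π, h (circleMap c t θ) := by
    rw [circleAverage_eq_integral_add (-π), smul_inv_smul₀ two_pi_pos.ne',
      intervalIntegral.integral_comp_add_right (fun θ ↦ h (circleMap c t θ)),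
      intervalIntegral.integral_of_le (by linarith [pi_pos]), integral_Ioc_eq_integral_Ioo]
    ring_nf
  rw [setIntegral_ball_eq_setIntegral_polar,
    setIntegral_congr_fun (measurableSet_Ioo.prod measurableSet_Ioo) hcongr,
    Measure.volume_eq_prod, setIntegral_prod _ (by rwa [← Measure.volume_eq_prod]),
    ← intervalIntegral.integral_smul, intervalIntegral.integral_of_le hs,
    integral_Ioc_eq_integral_Ioo]
  simp only [integral_smul, ← havg, smul_comm (2 * π)]

lemma setIntegral_ball_eq_intervalIntegral_circleAverage {h : ℂ → F} (hs : 0 ≤ s)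
    (hh : Continuous h) :
    ∫ ζ in ball c s, h ζ = (2 * π) • ∫ t in 0..s, t • circleAverage h c t := by
  simpa using setIntegral_ball_smul_eq_intervalIntegral_circleAverage (g := 1) hs (by simp) hh

end Polar

section Riesz

variable {u : ℂ → ℝ} {c z : ℂ} {r s R : ℝ}

/-- The Riesz measure `(2π)⁻¹ Δu` of a `C²` function, normalised so that `log ‖·‖` would have a unit
point mass at the origin. Negative values of the Laplacian are truncated to zero. -/
noncomputable def rieszMeasure (u : ℂ → ℝ) : Measure ℂ :=
  volume.withDensity fun ζ ↦ ENNReal.ofReal ((2 * π)⁻¹ * Δ u ζ)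

lemma isLocallyFiniteMeasure_rieszMeasure (hu : ContDiff ℝ 2 u) :
    IsLocallyFiniteMeasure (rieszMeasure u) :=
  .withDensity_ofReal ((continuous_laplacian_of_contDiff hu).const_mul _)

lemma setIntegral_rieszMeasure (hu : ContDiff ℝ 2 u) {S : Set ℂ} (hS : MeasurableSet S)
    (hΔ : ∀ ζ ∈ S, 0 ≤ Δ u ζ) (k : ℂ → ℝ) :
    ∫ ζ in S, k ζ ∂rieszMeasure u = (2 * π)⁻¹ * ∫ ζ in S, k ζ * Δ u ζ := by
  have hcont := continuous_laplacian_of_contDiff hu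
  rw [rieszMeasure, setIntegral_withDensity_eq_setIntegral_toReal_smul (by fun_prop)
    (by simp) _ hS, ← integral_const_mul]
  refine setIntegral_congr_fun hS fun ζ hζ ↦ ?_
  have : 0 ≤ (2 * π)⁻¹ * Δ u ζ := by have := hΔ ζ hζ; positivity
  simp only [ENNReal.toReal_ofReal this, smul_eq_mul]
  ring

lemma rieszMeasure_real_ball (hu : ContDiff ℝ 2 u) (hr : 0 ≤ r) (hΔ : ∀ ζ ∈ ball c r, 0 ≤ Δ u ζ) :
    (rieszMeasure u).real (ball c r) = r * radialDerivAverage u c r := by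
  have hcont := continuous_laplacian_of_contDiff hu
  have hmass := setIntegral_rieszMeasure hu measurableSet_ball hΔ 1
  simp only [Pi.one_apply, one_mul, setIntegral_const, smul_eq_mul, mul_one] at hmass
  rw [hmass, setIntegral_ball_eq_intervalIntegral_circleAverage hr hcont, smul_eq_mul,
    inv_mul_cancel_left₀ two_pi_pos.ne', intervalIntegral.integral_eq_sub_of_hasDerivAt
      (fun t _ ↦ hasDerivAt_smul_radialDerivAverage hu t)
      (Continuous.intervalIntegrable (by fun_prop) _ _)]
  simp

lemma rieszMeasure_real_ball_mul_log_le (hu : ContDiff ℝ 2 u) (hr : 0 < r) (hrR : r ≤ R)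
    (hΔ : ∀ ζ ∈ ball c R, 0 ≤ Δ u ζ) :
    (rieszMeasure u).real (ball c r) * log (R / r) ≤ circleAverage u c R - u c := by
  have hmono := monotoneOn_circleAverage hu hΔ ⟨le_rfl, hr.le.trans hrR⟩ ⟨hr.le, hrR⟩ hr.le
  rw [circleAverage_zero] at hmono
  rw [rieszMeasure_real_ball hu hr.le fun ζ hζ ↦ hΔ ζ (ball_subset_ball hrR hζ),
    log_div (hr.trans_le hrR).ne' hr.ne']
  linarith [mul_radialDerivAverage_mul_log_le hu hΔ hr hrR]

lemma circleAverage_sub_eq_setIntegral_posLog (hu : ContDiff ℝ 2 u) (hs : 0 < s)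
    (hΔ : ∀ ζ ∈ ball z s, 0 ≤ Δ u ζ) :
    circleAverage u z s - u z = ∫ ζ in ball z s, log⁺ (s / ‖ζ - z‖) ∂rieszMeasure u := by
  have hlog (t : ℝ) (ht : t ∈ Ioc 0 s) : t * (log s - log t) = t * log⁺ (s / t) := by
    have hst : 1 ≤ s / t := (one_le_div ht.1).2 ht.2
    rw [posLog_eq_log (hst.trans (le_abs_self _)), log_div hs.ne' ht.1.ne']
  have hint : IntervalIntegrable (fun t ↦ t * log⁺ (s / t)) volume 0 s := by
    refine IntervalIntegrable.congr (f := fun t ↦ t * (log s - log t)) (fun t ht ↦ ?_)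
      (Continuous.intervalIntegrable ?_ 0 s)
    · exact hlog t (uIoc_of_le hs.le ▸ ht)
    · simpa only [mul_sub] using! (continuous_mul_const (log s)).sub continuous_mul_log
  have hpolar := setIntegral_ball_smul_eq_intervalIntegral_circleAverage (c := z) hs.le hint
    (continuous_laplacian_of_contDiff hu)
  simp only [smul_eq_mul] at hpolar
  rw [setIntegral_rieszMeasure hu measurableSet_ball hΔ, hpolar,
    inv_mul_cancel_left₀ two_pi_pos.ne',
    ← intervalIntegral_log_smul_circleAverage_laplacian hu hs.le]
  refine intervalIntegral.integral_congr_ae (.of_forall fun t ht ↦ ?_)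
  rw [hlog t (uIoc_of_le hs.le ▸ ht), smul_eq_mul]

lemma setIntegral_ball_le_circleAverage (hu : ContDiff ℝ 2 u) (hs : 0 ≤ s)
    (hΔ : ∀ ζ ∈ ball z s, 0 ≤ Δ u ζ) :
    ∫ ζ in ball z s, u ζ ≤ π * s ^ 2 * circleAverage u z s := by
  have hcont := hu.continuous
  calc ∫ ζ in ball z s, u ζ = 2 * π * ∫ t in 0..s, t * circleAverage u z t :=
        setIntegral_ball_eq_intervalIntegral_circleAverage hs hcont
    _ ≤ 2 * π * ∫ t in 0..s, t * circleAverage u z s := by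
        gcongr
        refine intervalIntegral.integral_mono_on hs
          (Continuous.intervalIntegrable (by fun_prop) _ _)
          (Continuous.intervalIntegrable (by fun_prop) _ _) fun t ht ↦ ?_
        exact mul_le_mul_of_nonneg_left
          (monotoneOn_circleAverage hu hΔ ht (right_mem_Icc.2 hs) ht.2) ht.1
    _ = π * s ^ 2 * circleAverage u z s := by
        rw [intervalIntegral.integral_mul_const, integral_id]
        ring

lemma mul_apply_le_setIntegral_ball (hu : ContDiff ℝ 2 u) (hs : 0 ≤ s)
    (hΔ : ∀ ζ ∈ ball z s, 0 ≤ Δ u ζ) :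
    π * s ^ 2 * u z ≤ ∫ ζ in ball z s, u ζ := by
  have hcont := hu.continuous
  calc π * s ^ 2 * u z = 2 * π * ∫ t in 0..s, t * u z := by
        rw [intervalIntegral.integral_mul_const, integral_id]
        ring
    _ ≤ 2 * π * ∫ t in 0..s, t * circleAverage u z t := by
        gcongr
        refine intervalIntegral.integral_mono_on hs
          (Continuous.intervalIntegrable (by fun_prop) _ _)
          (Continuous.intervalIntegrable (by fun_prop) _ _) fun t ht ↦ ?_
        refine mul_le_mul_of_nonneg_left ?_ ht.1
        simpa using monotoneOn_circleAverage hu hΔ (left_mem_Icc.2 hs) ht ht.1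
    _ = ∫ ζ in ball z s, u ζ :=
        (setIntegral_ball_eq_intervalIntegral_circleAverage hs hcont).symm

lemma mul_apply_le_mul_circleAverage (hu : ContDiff ℝ 2 u) (hs : 0 ≤ s) (hR : 0 ≤ R)
    (hsub : ball z s ⊆ ball c R) (hΔ : ∀ ζ ∈ ball c R, 0 ≤ Δ u ζ) (hu₀ : ∀ ζ ∈ ball c R, u ζ ≤ 0) :
    R ^ 2 * u c ≤ s ^ 2 * circleAverage u z s := by
  have hint : IntegrableOn u (ball c R) :=
    (hu.continuous.continuousOn.integrableOn_compact (isCompact_closedBall c R)).mono_set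
      ball_subset_closedBall
  have hmono : ∫ ζ in ball c R, u ζ ≤ ∫ ζ in ball z s, u ζ := by
    rw [← neg_le_neg_iff, ← integral_neg, ← integral_neg]
    refine setIntegral_mono_set hint.neg ?_ hsub.eventuallyLE
    filter_upwards [ae_restrict_mem measurableSet_ball] with ζ hζ
    exact neg_nonneg.2 (hu₀ ζ hζ)
  refine le_of_mul_le_mul_left ?_ pi_pos
  linarith [mul_apply_le_setIntegral_ball hu hR hΔ,
    setIntegral_ball_le_circleAverage hu hs fun ζ hζ ↦ hΔ ζ (hsub hζ)]

lemma neg_apply_le_add_setIntegral_posLog (hu : ContDiff ℝ 2 u) (hs : 0 < s) (hrR : r ≤ R)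
    (hsub : ball z s ⊆ ball c r) (hΔ : ∀ ζ ∈ ball c R, 0 ≤ Δ u ζ) (hu₀ : ∀ ζ ∈ ball c R, u ζ ≤ 0) :
    -u z ≤ -u c * (R / s) ^ 2 + ∫ ζ in ball c r, log⁺ (s / ‖ζ - z‖) ∂rieszMeasure u := by
  have hsubR := hsub.trans (ball_subset_ball hrR)
  have hR : 0 ≤ R := (pos_of_mem_ball (hsubR (mem_ball_self hs))).le
  have hmean : u c * (R / s) ^ 2 ≤ circleAverage u z s := by
    rw [div_pow, mul_div_assoc', div_le_iff₀ (by positivity)]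
    linarith [mul_apply_le_mul_circleAverage hu hs.le hR hsubR hΔ hu₀]
  have hpot : ∫ ζ in ball c r, log⁺ (s / ‖ζ - z‖) ∂rieszMeasure u = circleAverage u z s - u z := by
    rw [circleAverage_sub_eq_setIntegral_posLog hu hs fun ζ hζ ↦ hΔ ζ (hsubR hζ)]
    refine setIntegral_eq_of_subset_of_forall_sdiff_eq_zero measurableSet_ball hsub fun ζ hζ ↦ ?_
    have : s ≤ ‖ζ - z‖ := by simpa [dist_eq_norm] using hζ.2
    rw [posLog_eq_zero_iff, abs_of_nonneg (by positivity)]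
    exact div_le_one_of_le₀ this (norm_nonneg _)
  rw [hpot]
  linarith

end Riesz

section ExponentialIntegral

variable {X Y : Type*} [MeasurableSpace X] [MeasurableSpace Y] {μ : Measure X} {ν : Measure Y}

/-- Jensen's inequality for the normalisation of `ν`, applied to the rescaled function
`ν.real univ * f`, which has average `∫ y, f y ∂ν`. -/
lemma ofReal_exp_integral_le_laverage [IsFiniteMeasure ν] [NeZero ν] {f : Y → ℝ}
    (hf : AEStronglyMeasurable f ν) (hf₀ : ∀ y, 0 ≤ f y) :
    ENNReal.ofReal (exp (∫ y, f y ∂ν)) ≤ ⨍⁻ y, ENNReal.ofReal (exp (ν.real univ * f y)) ∂ν := by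
  set N := ν.real univ
  have hN : 0 < N := measureReal_univ_pos
  have hexp : AEStronglyMeasurable (fun y ↦ exp (N * f y)) ν :=
    continuous_exp.comp_aestronglyMeasurable (hf.const_mul N)
  by_cases hint : Integrable (fun y ↦ exp (N * f y)) ν
  · have hf_int : Integrable f ν := by
      refine (hint.const_mul N⁻¹).mono' hf (.of_forall fun y ↦ ?_)
      rw [norm_of_nonneg (hf₀ y), le_inv_mul_iff₀ hN]
      linarith [add_one_le_exp (N * f y)]
    have hjensen := convexOn_exp.map_average_le continuousOn_exp isClosed_univ
      (.of_forall fun _ ↦ mem_univ _) (hf_int.const_mul N) hint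
    rw [average_eq, integral_const_mul, smul_eq_mul, inv_mul_cancel_left₀ hN.ne'] at hjensen
    rw [laverage_eq, ← ofReal_average hint (.of_forall fun y ↦ (exp_pos _).le)]
    exact ENNReal.ofReal_le_ofReal hjensen
  · have htop : ∫⁻ y, ENNReal.ofReal (exp (N * f y)) ∂ν = ∞ := by
      by_contra h
      exact hint ⟨hexp, (hasFiniteIntegral_iff_ofReal (.of_forall fun y ↦ (exp_pos _).le)).2
        (lt_top_iff_ne_top.2 h)⟩
    simp [laverage_eq, htop, ENNReal.top_div]

lemma lintegral_exp_integral_le [SFinite μ] [IsFiniteMeasure ν] [Nonempty Y] {k : X → Y → ℝ}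
    {m : ℝ} {C : ℝ≥0∞} (hm : ν.real univ ≤ m) (hk : Measurable k.uncurry)
    (hk₀ : ∀ x y, 0 ≤ k x y) (hC : ∀ y, ∫⁻ x, ENNReal.ofReal (exp (m * k x y)) ∂μ ≤ C) :
    ∫⁻ x, ENNReal.ofReal (exp (∫ y, k x y ∂ν)) ∂μ ≤ C := by
  rcases eq_zero_or_neZero ν with rfl | hν
  · obtain ⟨y⟩ := ‹Nonempty Y›
    refine le_trans (lintegral_mono fun x ↦ ?_) (hC y)
    have := mul_nonneg (measureReal_nonneg.trans hm) (hk₀ x y)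
    gcongr
    simpa
  · calc ∫⁻ x, ENNReal.ofReal (exp (∫ y, k x y ∂ν)) ∂μ
        ≤ ∫⁻ x, ⨍⁻ y, ENNReal.ofReal (exp (m * k x y)) ∂ν ∂μ := by
          refine lintegral_mono fun x ↦ (ofReal_exp_integral_le_laverage
            (hk.comp measurable_prodMk_left).aestronglyMeasurable (hk₀ x)).trans
            (lintegral_mono fun y ↦ ?_)
          exact ENNReal.ofReal_le_ofReal (exp_le_exp.2 (mul_le_mul_of_nonneg_right hm (hk₀ x y)))
      _ = ⨍⁻ y, ∫⁻ x, ENNReal.ofReal (exp (m * k x y)) ∂μ ∂ν :=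
          lintegral_lintegral_swap (by fun_prop)
      _ ≤ ⨍⁻ _, C ∂ν := lintegral_mono hC
      _ = C := laverage_const ν C

end ExponentialIntegral

section LogKernel

lemma exp_mul_posLog_le {E : Type*} [NormedAddCommGroup E] {m s : ℝ} (hs : 0 < s) (x : E) :
    exp (m * log⁺ (s / ‖x‖)) ≤ 1 + (ball 0 s).indicator (fun x ↦ s ^ m * ‖x‖ ^ (-m)) x := by
  by_cases hx : x ∈ ball 0 s ∧ x ≠ 0
  · obtain ⟨hxs, hx₀⟩ := hx
    have hx₀ := norm_pos_iff.2 hx₀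
    rw [indicator_of_mem hxs, posLog_eq_log, mul_comm m, exp_mul, exp_log (by positivity),
      div_rpow hs.le hx₀.le, rpow_neg hx₀.le, div_eq_mul_inv]
    · linarith
    · rw [abs_of_pos (by positivity), one_le_div hx₀]
      exact (mem_ball_zero_iff.1 hxs).le
  · have : log⁺ (s / ‖x‖) = 0 := by
      rw [posLog_eq_zero_iff, abs_of_nonneg (by positivity)]
      rcases eq_or_ne x 0 with rfl | hx₀
      · simp
      · exact div_le_one_of_le₀ (not_lt.1 fun h ↦ hx ⟨mem_ball_zero_iff.2 h, hx₀⟩) (norm_nonneg _)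
    rw [this, mul_zero, exp_zero, le_add_iff_nonneg_right]
    exact indicator_nonneg (fun x _ ↦ by positivity) x

variable {E : Type*} [NormedAddCommGroup E] [NormedSpace ℝ E] [FiniteDimensional ℝ E]
  [MeasurableSpace E] [BorelSpace E] [Nontrivial E] (μ : Measure E) [μ.IsAddHaarMeasure]

lemma integrableOn_ball_rpow_norm {m : ℝ} (hm : -m < Module.finrank ℝ E) (s : ℝ) :
    IntegrableOn (fun x : E ↦ ‖x‖ ^ m) (ball 0 s) μ := by
  rw [integrableOn_fun_norm_addHaar μ (f := (· ^ m))]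
  have hdim : ((Module.finrank ℝ E - 1 : ℕ) : ℝ) = Module.finrank ℝ E - 1 :=
    Nat.cast_pred Module.finrank_pos
  have hint := (intervalIntegral.intervalIntegrable_rpow' (a := 0) (b := max s 0)
    (r := Module.finrank ℝ E - 1 + m) (by linarith))
  rw [intervalIntegrable_iff_integrableOn_Ioo_of_le (le_max_right _ _)] at hint
  refine (hint.mono_set (Ioo_subset_Ioo_right (le_max_left s 0))).congr_fun (fun t ht ↦ ?_)
    measurableSet_Ioo
  dsimp only
  rw [← hdim, rpow_add ht.1, rpow_natCast, smul_eq_mul]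

lemma exists_setLIntegral_exp_mul_posLog_le {m s : ℝ} (hm : m < Module.finrank ℝ E) (hs : 0 < s)
    {A : Set E} (hA : μ A ≠ ∞) :
    ∃ C ≠ ∞, ∀ y, ∫⁻ x in A, ENNReal.ofReal (exp (m * log⁺ (s / ‖y - x‖))) ∂μ ≤ C := by
  set g : E → ℝ := (ball 0 s).indicator fun x ↦ s ^ m * ‖x‖ ^ (-m)
  have hg : Integrable g μ := (integrable_indicator_iff measurableSet_ball).2
    ((integrableOn_ball_rpow_norm μ (by simpa using hm) s).const_mul (s ^ m))
  refine ⟨μ A + ∫⁻ x, ENNReal.ofReal (g x) ∂μ,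
    ENNReal.add_ne_top.2 ⟨hA, (hasFiniteIntegral_iff_ofReal ?_).1 hg.2 |>.ne⟩, fun y ↦ ?_⟩
  · exact .of_forall (indicator_nonneg fun x _ ↦ by positivity)
  calc ∫⁻ x in A, ENNReal.ofReal (exp (m * log⁺ (s / ‖y - x‖))) ∂μ
      ≤ ∫⁻ x in A, (1 + ENNReal.ofReal (g (y - x))) ∂μ := by
        refine lintegral_mono fun x ↦ ?_
        rw [← ENNReal.ofReal_one]
        exact (ENNReal.ofReal_le_ofReal (exp_mul_posLog_le hs _)).trans ENNReal.ofReal_add_le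
    _ = μ A + ∫⁻ x in A, ENNReal.ofReal (g (y - x)) ∂μ := by
        rw [lintegral_add_left measurable_const, setLIntegral_one]
    _ ≤ μ A + ∫⁻ x, ENNReal.ofReal (g (y - x)) ∂μ := by
        gcongr
        exact Measure.restrict_le_self
    _ = μ A + ∫⁻ x, ENNReal.ofReal (g x) ∂μ := by
        rw [lintegral_sub_left_eq_self (fun x ↦ ENNReal.ofReal (g x))]

end LogKernel

lemma exists_contDiff_eventuallyEq_of_contDiffOn_ball {E F : Type*} [NormedAddCommGroup E]
    [NormedSpace ℝ E] [HasContDiffBump E] [NormedAddCommGroup F] [NormedSpace ℝ F] {n : ℕ∞}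
    {f : E → F} {c : E} {r R : ℝ} (hr : 0 < r) (hrR : r < R) (hf : ContDiffOn ℝ n f (ball c R)) :
    ∃ g : E → F, ContDiff ℝ n g ∧ ∀ x ∈ closedBall c r, g =ᶠ[𝓝 x] f := by
  obtain ⟨b, hrb, hbR⟩ := exists_between hrR
  obtain ⟨a, hra, hab⟩ := exists_between hrb
  let χ : ContDiffBump c := ⟨a, b, hr.trans hra, hab⟩
  refine ⟨fun x ↦ χ x • f x, contDiff_iff_contDiffAt.2 fun x ↦ ?_, fun x hx ↦ ?_⟩
  · by_cases hx : x ∈ ball c R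
    · exact χ.contDiff.contDiffAt.smul (hf.contDiffAt (isOpen_ball.mem_nhds hx))
    · have hχ : x ∉ tsupport χ := fun h ↦
        hx (closedBall_subset_ball hbR (χ.tsupport_eq ▸ h))
      refine contDiffAt_const (c := 0) |>.congr_of_eventuallyEq ?_
      filter_upwards [notMem_tsupport_iff_eventuallyEq.1 hχ] with y hy
      simp [hy]
  · filter_upwards [isOpen_ball.mem_nhds (closedBall_subset_ball hra hx)] with y hy
    simp [χ.one_of_mem_closedBall (ball_subset_closedBall hy)]

section Disc

variable {u : ℂ → ℝ} {c : ℂ} {a r R ρ m : ℝ}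

lemma rieszMeasure_real_ball_le (hu : ContDiff ℝ 2 u) (hr : 0 < r) (hrR : r < R)
    (hm : a ≤ m * log (R / r)) (hΔ : ∀ z ∈ ball c R, 0 ≤ Δ u z)
    (hu₀ : ∀ z ∈ closedBall c R, u z ≤ 0) (ha : -a ≤ u c) :
    (rieszMeasure u).real (ball c r) ≤ m := by
  have hlog : 0 < log (R / r) := log_pos ((one_lt_div hr).2 hrR)
  have havg : circleAverage u c R ≤ 0 := by
    refine circleAverage_mono_on_of_le_circle hu.continuous.continuousOn.circleIntegrable'
      fun z hz ↦ hu₀ z (sphere_subset_closedBall ?_)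
    rwa [abs_of_pos (hr.trans hrR)] at hz
  refine le_of_mul_le_mul_right ?_ hlog
  linarith [rieszMeasure_real_ball_mul_log_le hu hr hrR.le hΔ]

lemma exists_setLIntegral_exp_neg_le_of_contDiff (hr : 0 < r) (hρr : ρ < r) (hrR : r < R)
    (hm : a ≤ m * log (R / r)) (hm₂ : m < 2) :
    ∃ C ≠ ∞, ∀ u : ℂ → ℝ, ContDiff ℝ 2 u → (∀ z ∈ ball c R, 0 ≤ Δ u z) →
      (∀ z ∈ closedBall c R, u z ≤ 0) → -a ≤ u c →
      ∫⁻ z in ball c ρ, ENNReal.ofReal (exp (-u z)) ≤ C := by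
  set s := r - ρ
  have hs : 0 < s := sub_pos.2 hρr
  obtain ⟨K, hK, hKle⟩ := exists_setLIntegral_exp_mul_posLog_le volume
    (by rwa [Complex.finrank_real_complex]) hs (measure_ball_lt_top (x := c) (r := ρ)).ne
  refine ⟨ENNReal.ofReal (exp (a * (R / s) ^ 2)) * K, by finiteness, fun u hu hΔ hu₀ ha ↦ ?_⟩
  have := isLocallyFiniteMeasure_rieszMeasure hu
  let ν := (rieszMeasure u).restrict (ball c r)
  have : IsFiniteMeasure ν := isFiniteMeasure_restrict.2 measure_ball_lt_top.ne
  have hν : ν.real univ ≤ m := by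
    simpa [ν] using rieszMeasure_real_ball_le hu hr hrR hm hΔ hu₀ ha
  have hpoint (z : ℂ) (hz : z ∈ ball c ρ) : ENNReal.ofReal (exp (-u z)) ≤
      ENNReal.ofReal (exp (a * (R / s) ^ 2)) *
        ENNReal.ofReal (exp (∫ ζ, log⁺ (s / ‖ζ - z‖) ∂ν)) := by
    have hsub : ball z s ⊆ ball c r := ball_subset_ball' (by linarith [mem_ball.1 hz])
    have hriesz := neg_apply_le_add_setIntegral_posLog hu hs hrR.le hsub hΔ
      fun ζ hζ ↦ hu₀ ζ (ball_subset_closedBall hζ)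
    rw [← ENNReal.ofReal_mul (exp_pos _).le, ← exp_add]
    gcongr
    refine hriesz.trans ?_
    gcongr
    linarith
  calc ∫⁻ z in ball c ρ, ENNReal.ofReal (exp (-u z))
      ≤ ∫⁻ z in ball c ρ, ENNReal.ofReal (exp (a * (R / s) ^ 2)) *
          ENNReal.ofReal (exp (∫ ζ, log⁺ (s / ‖ζ - z‖) ∂ν)) :=
        setLIntegral_mono' measurableSet_ball hpoint
    _ = ENNReal.ofReal (exp (a * (R / s) ^ 2)) *
          ∫⁻ z in ball c ρ, ENNReal.ofReal (exp (∫ ζ, log⁺ (s / ‖ζ - z‖) ∂ν)) :=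
        lintegral_const_mul' _ _ ENNReal.ofReal_ne_top
    _ ≤ ENNReal.ofReal (exp (a * (R / s) ^ 2)) * K := by
        gcongr
        refine lintegral_exp_integral_le hν ?_ (fun _ _ ↦ posLog_nonneg) hKle
        exact continuous_posLog.measurable.comp (by fun_prop)

lemma exists_setLIntegral_exp_neg_le (ha₀ : 0 ≤ a) (hρ : 0 < ρ) (hρR : ρ < exp (-(a / 2)) * R) :
    ∃ C ≠ ∞, ∀ u : ℂ → ℝ, ContDiffOn ℝ 2 u (ball c R) → (∀ z ∈ ball c R, 0 ≤ Δ u z) →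
      (∀ z ∈ ball c R, u z ≤ 0) → -a ≤ u c →
      ∫⁻ z in ball c ρ, ENNReal.ofReal (exp (-u z)) ≤ C := by
  obtain ⟨R', hρR', hR'R⟩ := exists_between ((div_lt_iff₀' (exp_pos _)).2 hρR)
  obtain ⟨r, hρr, hrR'⟩ := exists_between ((div_lt_iff₀' (exp_pos _)).1 hρR')
  have hr : 0 < r := hρ.trans hρr
  have hR' : 0 < R' := (div_pos hρ (exp_pos _)).trans hρR'
  have hr_lt : r < R' :=
    hrR'.trans_le (mul_le_of_le_one_left hR'.le (exp_le_one_iff.2 (by linarith)))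
  have hlog : a / 2 < log (R' / r) := by
    rwa [lt_log_iff_exp_lt (div_pos hR' hr), lt_div_iff₀ hr, ← lt_div_iff₀' (exp_pos _),
      div_eq_inv_mul, ← exp_neg]
  have hlog₀ : 0 < log (R' / r) := log_pos ((one_lt_div hr).2 hr_lt)
  obtain ⟨C, hC, hCle⟩ := exists_setLIntegral_exp_neg_le_of_contDiff (c := c) (a := a)
    (m := a / log (R' / r)) hr hρr hr_lt (div_mul_cancel₀ a hlog₀.ne').ge
    ((div_lt_iff₀ hlog₀).2 (by linarith))
  refine ⟨C, hC, fun u hu hΔ hu₀ ha ↦ ?_⟩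
  obtain ⟨g, hg, hgu⟩ := exists_contDiff_eventuallyEq_of_contDiffOn_ball (n := 2) hR' hR'R hu
  have hgu' (z : ℂ) (hz : z ∈ closedBall c R') : g z = u z := (hgu z hz).eq_of_nhds
  have hsub : closedBall c R' ⊆ ball c R := closedBall_subset_ball hR'R
  calc ∫⁻ z in ball c ρ, ENNReal.ofReal (exp (-u z))
      = ∫⁻ z in ball c ρ, ENNReal.ofReal (exp (-g z)) :=
        setLIntegral_congr_fun measurableSet_ball fun z hz ↦ by
          rw [hgu' z (ball_subset_closedBall (ball_subset_ball (hρr.trans hr_lt).le hz))]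
    _ ≤ C := hCle g hg (fun z hz ↦ ?_) (fun z hz ↦ ?_) ?_
  · have hz := ball_subset_closedBall hz
    rw [(InnerProductSpace.laplacian_congr_nhds (hgu z hz)).eq_of_nhds]
    exact hΔ z (hsub hz)
  · exact hgu' z hz ▸ hu₀ z (hsub hz)
  · rwa [hgu' c (mem_closedBall_self hR'.le)]

end Disc

section PolarLIntegral

lemma lintegral_complex_eq_setLIntegral_Ioo_setLIntegral_Ioi {f : ℂ → ℝ≥0∞} (hf : Measurable f) :
    ∫⁻ w, f w = ∫⁻ θ in Ioo (-π) π, ∫⁻ r in Ioi (0 : ℝ),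
      ENNReal.ofReal r * f (circleMap 0 r θ) := by
  have hpolar (p : ℝ × ℝ) : Complex.polarCoord.symm p = circleMap 0 p.1 p.2 := by
    rw [Complex.polarCoord_symm_apply, circleMap_zero, Complex.exp_mul_I]
    push_cast
    rfl
  rw [← Complex.lintegral_comp_polarCoord_symm, polarCoord_target, Measure.volume_eq_prod,
    ← Measure.prod_restrict, lintegral_prod_symm _ (by simp_rw [hpolar]; fun_prop)]
  simp_rw [hpolar, smul_eq_mul]

variable {E : Type*} [NormedAddCommGroup E] [NormedSpace ℝ E] [FiniteDimensional ℝ E]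
  [Nontrivial E] [MeasurableSpace E] [BorelSpace E] (μ : Measure E) [μ.IsAddHaarMeasure]

lemma lintegral_eq_lintegral_toSphere_setLIntegral_Ioi {f : E → ℝ≥0∞} (hf : Measurable f) :
    ∫⁻ z, f z ∂μ = ∫⁻ v, (∫⁻ r in Ioi (0 : ℝ),
      ENNReal.ofReal (r ^ (Module.finrank ℝ E - 1)) * f (r • (v : E))) ∂μ.toSphere := by
  have hg : Measurable fun p : sphere (0 : E) 1 × Ioi (0 : ℝ) ↦ f ((p.2 : ℝ) • (p.1 : E)) := by
    fun_prop
  have hpolar := μ.measurePreserving_homeomorphUnitSphereProd.lintegral_comp hg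
  have hcancel (z : ({0}ᶜ : Set E)) : ‖(z : E)‖ • ‖(z : E)‖⁻¹ • (z : E) = z :=
    smul_inv_smul₀ (norm_ne_zero_iff.2 z.2) _
  simp only [homeomorphUnitSphereProd_apply_snd_coe, homeomorphUnitSphereProd_apply_fst_coe,
    hcancel] at hpolar
  rw [lintegral_subtype_comap (measurableSet_singleton _).compl, restrict_compl_singleton,
    lintegral_prod _ hg.aemeasurable] at hpolar
  rw [hpolar]
  refine lintegral_congr fun v ↦ ?_
  rw [Measure.volumeIoiPow, lintegral_withDensity_eq_lintegral_mul _ (by fun_prop) (by fun_prop)]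
  exact lintegral_subtype_comap measurableSet_Ioi
    fun r : ℝ ↦ ENNReal.ofReal (r ^ (Module.finrank ℝ E - 1)) * f (r • (v : E))

end PolarLIntegral

section Slice

variable {E : Type*} [NormedAddCommGroup E] [NormedSpace ℂ E] [FiniteDimensional ℂ E]
  [MeasurableSpace E] [BorelSpace E] (μ : Measure E) [μ.IsAddHaarMeasure]

lemma measurePreserving_smul_of_norm_eq_one {w : ℂ} (hw : ‖w‖ = 1) :
    MeasurePreserving (w • · : E → E) μ μ := by
  have := FiniteDimensional.complexToReal E
  let T : E →ₗ[ℝ] E := (w • (LinearMap.id : E →ₗ[ℂ] E)).restrictScalars ℝ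
  have hdet : LinearMap.det T = 1 := by
    rw [LinearMap.det_restrictScalars, LinearMap.det_smul, LinearMap.det_id, mul_one,
      Algebra.norm_complex_apply, map_pow, Complex.normSq_eq_norm_sq, hw, one_pow, one_pow]
  have hmap := Measure.map_linearMap_addHaar_eq_smul_addHaar μ (hdet.trans_ne one_ne_zero)
  rw [hdet, inv_one, abs_one, ENNReal.ofReal_one, one_smul] at hmap
  exact ⟨measurable_const_smul w, hmap⟩

variable [Nontrivial E]

/-- Average the polar coordinate formula over the rotations `z ↦ e ^ (i θ) • z`, which preserve
`μ`. -/
lemma ofReal_two_pi_mul_lintegral_eq_lintegral_toSphere_lintegral {f : E → ℝ≥0∞}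
    (hf : Measurable f) :
    ENNReal.ofReal (2 * π) * ∫⁻ z, f z ∂μ = ∫⁻ v, (∫⁻ w : ℂ,
      ENNReal.ofReal (‖w‖ ^ (Module.finrank ℝ E - 2)) * f (w • (v : E))) ∂μ.toSphere := by
  have := FiniteDimensional.complexToReal E
  have hdim : Module.finrank ℝ E - 1 = Module.finrank ℝ E - 2 + 1 := by
    have := finrank_real_of_complex E
    have := Module.finrank_pos (R := ℂ) (M := E)
    omega
  have hrot (θ : ℝ) : Measurable fun z : E ↦ f (circleMap 0 1 θ • z) := by fun_prop
  calc ENNReal.ofReal (2 * π) * ∫⁻ z, f z ∂μ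
      = ∫⁻ θ in Ioo (-π) π, ∫⁻ z, f (circleMap 0 1 θ • z) ∂μ := by
        simp_rw [fun θ : ℝ ↦ (measurePreserving_smul_of_norm_eq_one μ
          (w := circleMap 0 1 θ) (by simp)).lintegral_comp hf]
        rw [setLIntegral_const, Real.volume_Ioo, mul_comm, sub_neg_eq_add, two_mul]
    _ = ∫⁻ θ in Ioo (-π) π, ∫⁻ v, (∫⁻ r in Ioi (0 : ℝ),
          ENNReal.ofReal (r ^ (Module.finrank ℝ E - 1)) *
            f (circleMap 0 1 θ • r • (v : E))) ∂μ.toSphere := by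
        simp_rw [lintegral_eq_lintegral_toSphere_setLIntegral_Ioi μ (hrot _)]
    _ = ∫⁻ v, (∫⁻ θ in Ioo (-π) π, ∫⁻ r in Ioi (0 : ℝ),
          ENNReal.ofReal (r ^ (Module.finrank ℝ E - 1)) *
            f (circleMap 0 1 θ • r • (v : E))) ∂μ.toSphere := by
        refine lintegral_lintegral_swap (Measurable.aemeasurable ?_)
        exact Measurable.lintegral_prod_right (by fun_prop)
    _ = _ := by
        refine lintegral_congr fun v ↦ ?_
        rw [lintegral_complex_eq_setLIntegral_Ioo_setLIntegral_Ioi (by fun_prop)]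
        refine lintegral_congr fun θ ↦ setLIntegral_congr_fun measurableSet_Ioi fun r hr ↦ ?_
        rw [hdim, pow_succ', ENNReal.ofReal_mul (le_of_lt hr), mul_assoc, norm_circleMap_zero,
          abs_of_pos hr, ← Complex.coe_smul, smul_smul, circleMap_zero, circleMap_zero,
          Complex.ofReal_one, one_mul, mul_comm (Complex.exp _)]

lemma ofReal_two_pi_mul_setLIntegral_ball_le {f : E → ℝ≥0∞} {ρ : ℝ} {C : ℝ≥0∞}
    (hf : Measurable ((ball 0 ρ).indicator f))
    (hC : ∀ v : E, ‖v‖ = 1 → ∫⁻ w in ball (0 : ℂ) ρ, f (w • v) ≤ C) :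
    ENNReal.ofReal (2 * π) * ∫⁻ z in ball 0 ρ, f z ∂μ ≤
      ENNReal.ofReal (ρ ^ (Module.finrank ℝ E - 2)) * C * μ.toSphere univ := by
  have hline (v : sphere (0 : E) 1) :
      ∫⁻ w : ℂ, ENNReal.ofReal (‖w‖ ^ (Module.finrank ℝ E - 2)) *
        (ball 0 ρ).indicator f (w • (v : E)) ≤
      ENNReal.ofReal (ρ ^ (Module.finrank ℝ E - 2)) * C := by
    have hv : ‖(v : E)‖ = 1 := norm_eq_of_mem_sphere v
    calc _ ≤ ∫⁻ w : ℂ, (ball 0 ρ).indicator (fun w ↦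
            ENNReal.ofReal (ρ ^ (Module.finrank ℝ E - 2)) * f (w • (v : E))) w := by
          refine lintegral_mono fun w ↦ ?_
          by_cases hw : ‖w‖ < ρ
          · have hle : ‖w‖ ^ (Module.finrank ℝ E - 2) ≤ ρ ^ (Module.finrank ℝ E - 2) := by gcongr
            simp only [indicator, mem_ball_zero_iff, norm_smul, hv, mul_one, hw, if_true]
            gcongr
          · simp [indicator, norm_smul, hv, hw]
      _ = ENNReal.ofReal (ρ ^ (Module.finrank ℝ E - 2)) *
            ∫⁻ w in ball (0 : ℂ) ρ, f (w • (v : E)) := by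
          rw [lintegral_indicator measurableSet_ball,
            lintegral_const_mul' _ _ ENNReal.ofReal_ne_top]
      _ ≤ _ := by grw [hC v hv]
  rw [← lintegral_indicator measurableSet_ball,
    ofReal_two_pi_mul_lintegral_eq_lintegral_toSphere_lintegral μ hf]
  exact (lintegral_mono hline).trans_eq (lintegral_const _)

lemma exists_setLIntegral_exp_neg_le_of_laplacian_line_nonneg {a R ρ : ℝ} (ha₀ : 0 ≤ a)
    (hρ : 0 < ρ) (hρR : ρ < exp (-(a / 2)) * R) :
    ∃ C ≠ ∞, ∀ ψ : E → ℝ, ContDiffOn ℝ 2 ψ (ball 0 R) →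
      (∀ v : E, ∀ w : ℂ, w • v ∈ ball (0 : E) R → 0 ≤ Δ (fun u : ℂ ↦ ψ (u • v)) w) →
      -a ≤ ψ 0 → (∀ z ∈ ball (0 : E) R, ψ z ≤ 0) →
      ∫⁻ z in ball 0 ρ, ENNReal.ofReal (exp (-ψ z)) ∂μ ≤ C := by
  have := FiniteDimensional.complexToReal E
  obtain ⟨C, hC, hdisc⟩ := exists_setLIntegral_exp_neg_le (c := 0) ha₀ hρ hρR
  refine ⟨ENNReal.ofReal (ρ ^ (Module.finrank ℝ E - 2)) * C * μ.toSphere univ /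
    ENNReal.ofReal (2 * π), by finiteness, fun ψ hψ hΔ ha hψ₀ ↦ ?_⟩
  have hline (v : E) (hv : ‖v‖ = 1) :
      ∫⁻ w in ball (0 : ℂ) ρ, ENNReal.ofReal (exp (-ψ (w • v))) ≤ C := by
    have hmaps : MapsTo (fun w : ℂ ↦ w • v) (ball 0 R) (ball 0 R) := fun w hw ↦ by
      simpa [norm_smul, hv] using hw
    exact hdisc _ (hψ.comp (by fun_prop) hmaps) (fun w hw ↦ hΔ v w (hmaps hw))
      (fun w hw ↦ hψ₀ _ (hmaps hw)) (by simpa using ha)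
  have hρR' : ρ ≤ R := by
    have hR : 0 < R := pos_of_mul_pos_right (hρ.trans hρR) (exp_pos _).le
    exact hρR.le.trans (mul_le_of_le_one_left hR.le (exp_le_one_iff.2 (by linarith)))
  have hmeas : Measurable ((ball (0 : E) ρ).indicator fun z ↦ ENNReal.ofReal (exp (-ψ z))) := by
    classical
    rw [← piecewise_eq_indicator]
    exact (ENNReal.continuous_ofReal.comp_continuousOn
      (hψ.continuousOn.mono (ball_subset_ball hρR')).neg.rexp).measurable_piecewise
      continuousOn_const measurableSet_ball
  rw [ENNReal.le_div_iff_mul_le (.inl (by simp [pi_pos])) (.inl ENNReal.ofReal_ne_top), mul_comm]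
  exact ofReal_two_pi_mul_setLIntegral_ball_le μ hmeas hline

theorem stmt_1_general {a R ρ : ℝ} (ha₀ : 0 ≤ a) (hρ : 0 < ρ) (hρR : ρ < exp (-(a / 2)) * R) :
    ∃ C : ℝ, 0 < C ∧ ∀ ψ : E → ℝ, ContDiffOn ℝ 2 ψ (ball 0 R) →
      (∀ v : E, ∀ w : ℂ, w • v ∈ ball (0 : E) R → 0 ≤ laplacian (fun u : ℂ ↦ ψ (u • v)) w) →
      -a ≤ ψ 0 → (∀ z ∈ ball (0 : E) R, ψ z ≤ 0) → ∫ z in ball 0 ρ, exp (-ψ z) ∂μ ≤ C := by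
  obtain ⟨C, hC, hCle⟩ :=
    exists_setLIntegral_exp_neg_le_of_laplacian_line_nonneg μ ha₀ hρ hρR
  refine ⟨C.toReal + 1, by positivity, fun ψ hψ hΔ ha hψ₀ ↦ ?_⟩
  have hΔ' (v : E) (w : ℂ) (hw : w • v ∈ ball (0 : E) R) :
      0 ≤ Δ (fun u : ℂ ↦ ψ (u • v)) w := by
    have hu : ContDiffAt ℝ 2 (fun u : ℂ ↦ ψ (u • v)) w :=
      (hψ.contDiffAt (isOpen_ball.mem_nhds hw)).comp w (by fun_prop)
    exact laplacian_eq_laplacian_of_contDiffAt hu ▸ hΔ v w hw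
  calc ∫ z in ball 0 ρ, exp (-ψ z) ∂μ
      ≤ (∫⁻ z in ball 0 ρ, ENNReal.ofReal (exp (-ψ z)) ∂μ).toReal := by
        simpa only [norm_of_nonneg (exp_pos _).le] using (le_norm_self _).trans
          (norm_integral_le_lintegral_norm (μ := μ.restrict (ball 0 ρ)) fun z ↦ exp (-ψ z))
    _ ≤ C.toReal := ENNReal.toReal_mono hC (hCle ψ hψ hΔ' ha hψ₀)
    _ ≤ C.toReal + 1 := le_add_of_nonneg_right zero_le_one

end Slice

/-- For every `n ≥ 1`, `R > 0` and `ρ` with `R/2 ≤ ρ < e^{-1/2} R`, there is a constant `C > 0`,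
depending only on `R`, `ρ` and `n`, such that every smooth plurisubharmonic function `ψ` on the
open ball `B_R(0) ⊆ ℂⁿ` with `ψ(0) ≥ -1` and `ψ ≤ 0` on `B_R(0)` satisfies
`∫_{B_ρ(0)} e^{-ψ} dV ≤ C`.  Plurisubharmonicity is expressed by requiring every restriction
of `ψ` to a complex line to have nonnegative Laplacian where defined. -/
theorem stmt_1 (n : ℕ) (hn : 1 ≤ n) (R ρ : ℝ) (hR : 0 < R) (hρ₁ : R / 2 ≤ ρ)
    (hρ₂ : ρ < Real.exp (-(1/2)) * R) :
    ∃ C : ℝ, 0 < C ∧ ∀ ψ : EuclideanSpace ℂ (Fin n) → ℝ,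
      ContDiffOn ℝ (⊤ : ℕ∞) ψ (Metric.ball (0 : EuclideanSpace ℂ (Fin n)) R) →
      (∀ z ∈ Metric.ball (0 : EuclideanSpace ℂ (Fin n)) R, ∀ v : EuclideanSpace ℂ (Fin n),
        ∀ w : ℂ, z + w • v ∈ Metric.ball (0 : EuclideanSpace ℂ (Fin n)) R →
          0 ≤ laplacian (fun u : ℂ => ψ (z + u • v)) w) →
      -1 ≤ ψ 0 →
      (∀ z ∈ Metric.ball (0 : EuclideanSpace ℂ (Fin n)) R, ψ z ≤ 0) →
      ∫ z in Metric.ball (0 : EuclideanSpace ℂ (Fin n)) ρ, Real.exp (-ψ z) ≤ C := by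
  have := Fin.pos_iff_nonempty.1 hn
  obtain ⟨C, hC, hCle⟩ := stmt_1_general (E := EuclideanSpace ℂ (Fin n)) volume
    zero_le_one (by linarith : 0 < ρ) hρ₂
  refine ⟨C, hC, fun ψ hψ hΔ hψ₀ hψ_nonpos ↦ hCle ψ (contDiffOn_infty.1 hψ 2)
    (fun v w hw ↦ ?_) hψ₀ hψ_nonpos⟩
  simpa only [zero_add] using hΔ 0 (mem_ball_self hR) v w (by rwa [zero_add])
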